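/- Let s ∈ (0,1) and let T_s : [0,1] → [0,1] be the Manneville–Pomeau map T_s(x) = x(1 + x^s) mod 1, so that T_s(x) = x + x^{1+s} for x close to 0, and let U_s : [0,1] → [0,c] denote the inverse branch of T_s restricted to [0,c], where c ∈ (0,1) is the unique point with T_s(c) = 1. Let ω_{α,β} be the concave modulus with ω_{α,β}(h) = h^α(−log h)^{−β} for small h > 0, where either α ∈ [0, min{s,1}) and β ≥ 0 with α + β > 0, or α = s and β = 0. Then there exist functions f, g ∈ C^{ω_{α,β}}([0,1]) which do not admit continuous sub-actions with respect to T_s and U_s, respectively. -/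

import Mathlib

/-!
The function `V x = sin (log x)` is bounded but oscillates at the fixed point `0`. Still,
`V ∘ T - V` extends continuously to `0`: with `y = x ^ s` one has `log (T x) = log x + log (1 + y)`,
and as a function of `y` the increment of `V` is Lipschitz. Hence `V ∘ T - V` is Hölder of exponent
`min s 1`. Its integral against every invariant measure vanishes, so a sub-action `u` satisfies
`u - V ≤ (u - V) ∘ T` near `0`. Since one step of `T` increases `log x` by at most `1`, an orbit
cannot jump over the regions where `V ≥ 0`: starting arbitrarily close to `0` with `V = -1`, it
reaches `V ≥ 0` while still arbitrarily close to `0`. There `u` has grown by at least `1`, which is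
impossible if `u` is continuous. Away from `0`, where `T` is a different branch, a negative penalty
keeps the function below the coboundary of `V`. For `U` the same argument applies to `-u` and the
coboundary `V - V ∘ U`.
-/

open MeasureTheory Set Filter Topology Real

noncomputable section

/-- A `T`-invariant Borel probability measure concentrated on `[0,1]`. -/
def InvariantProb (T : ℝ → ℝ) (μ : Measure ℝ) : Prop :=
  IsProbabilityMeasure μ ∧ μ (Set.Icc 0 1) = 1 ∧ μ.map T = μ

/-- The maximum ergodic average `m(f,T)` over invariant probability measures on `[0,1]`. -/
noncomputable def ergMax (T f : ℝ → ℝ) : ℝ :=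
  sSup {r : ℝ | ∃ μ : Measure ℝ, InvariantProb T μ ∧ r = ∫ x, f x ∂μ}

/-- `u` is a sub-action for `f` with respect to `T`. -/
def IsSubaction (T f u : ℝ → ℝ) : Prop :=
  ∀ x ∈ Set.Icc (0:ℝ) 1, f x + u x - u (T x) ≤ ergMax T f

/-- `f` belongs to `C^ω([0,1])`: a multiple of `ω` is a modulus of continuity for `f`. -/
def MemCmod (ω f : ℝ → ℝ) : Prop :=
  ∃ C > (0:ℝ), ∀ x ∈ Set.Icc (0:ℝ) 1, ∀ y ∈ Set.Icc (0:ℝ) 1, |f x - f y| ≤ C * ω |x - y|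

/-- A concave modulus of continuity. -/
def ConcaveModulus (ω : ℝ → ℝ) : Prop :=
  ContinuousOn ω (Set.Ici 0) ∧ MonotoneOn ω (Set.Ici 0) ∧ ω 0 = 0 ∧
    (∀ x, 0 ≤ x → 0 ≤ ω x) ∧ ConcaveOn ℝ (Set.Ici 0) ω

/-- `V` is regularly varying at `0` with index `σ`. -/
def RegVary0 (V : ℝ → ℝ) (σ : ℝ) : Prop :=
  ∀ t > (0:ℝ), Tendsto (fun x => V (t * x) / V x) (𝓝[>] 0) (𝓝 (t ^ σ))

/-- The modulus of continuity `ω_{α,β}`: `h^α (-log h)^{-β}` for `0 < h < h₀`, constant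
for `h ≥ h₀`, and vanishing at `0`. -/
noncomputable def omegaAB (α β h₀ : ℝ) : ℝ → ℝ := fun h =>
  if h ≤ 0 then 0
  else if h < h₀ then h ^ α * (-Real.log h) ^ (-β)
  else h₀ ^ α * (-Real.log h₀) ^ (-β)

lemma MemCmod.mono {ω ω' f : ℝ → ℝ} {C : ℝ} (hf : MemCmod ω f) (hC : 0 < C)
    (h : ∀ t ∈ Icc (0 : ℝ) 1, ω t ≤ C * ω' t) : MemCmod ω' f := by
  obtain ⟨K, hK, hfK⟩ := hf
  refine ⟨K * C, by positivity, fun x hx y hy => (hfK x hx y hy).trans ?_⟩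
  rw [mul_assoc]
  gcongr
  exact h _ ⟨abs_nonneg _, abs_sub_le_of_le_of_le hx.1 hx.2 hy.1 hy.2 |>.trans (by norm_num)⟩

lemma MemCmod.sub {ω f g : ℝ → ℝ} (hf : MemCmod ω f) (hg : MemCmod ω g) :
    MemCmod ω (fun x => f x - g x) := by
  obtain ⟨K, hK, hfK⟩ := hf
  obtain ⟨L, hL, hgL⟩ := hg
  refine ⟨K + L, by positivity, fun x hx y hy => ?_⟩
  calc |f x - g x - (f y - g y)| = |(f x - f y) - (g x - g y)| := by ring_nf
    _ ≤ |f x - f y| + |g x - g y| := abs_sub _ _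
    _ ≤ (K + L) * ω |x - y| := by linarith [hfK x hx y hy, hgL x hx y hy]

lemma MemCmod.comp_of_abs_sub_le {ω f φ : ℝ → ℝ} (hf : MemCmod ω f) (hω : MonotoneOn ω (Ici 0))
    (hφ : MapsTo φ (Icc 0 1) (Icc 0 1))
    (hφ1 : ∀ x ∈ Icc (0 : ℝ) 1, ∀ y ∈ Icc (0 : ℝ) 1, |φ x - φ y| ≤ |x - y|) :
    MemCmod ω (f ∘ φ) := by
  obtain ⟨K, hK, hfK⟩ := hf
  refine ⟨K, hK, fun x hx y hy => (hfK _ (hφ hx) _ (hφ hy)).trans ?_⟩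
  gcongr
  exact hω (mem_Ici.2 (abs_nonneg _)) (mem_Ici.2 (abs_nonneg _)) (hφ1 x hx y hy)

lemma memCmod_rpow_of_lipschitz {r K : ℝ} {f : ℝ → ℝ} (hr0 : 0 ≤ r) (hr1 : r ≤ 1) (hK : 0 < K)
    (hf : ∀ x ∈ Icc (0 : ℝ) 1, ∀ y ∈ Icc (0 : ℝ) 1, |f x - f y| ≤ K * |x - y|) :
    MemCmod (fun t => t ^ r) f :=
  MemCmod.mono (ω := id) ⟨K, hK, hf⟩ one_pos fun t ht => by
    simpa using rpow_le_rpow_of_exponent_ge' ht.1 ht.2 hr0 hr1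

lemma InvariantProb.aemeasurable {T : ℝ → ℝ} {μ : Measure ℝ} (hμ : InvariantProb T μ) :
    AEMeasurable T μ := by
  have := hμ.1
  have : NeZero (μ.map T) := by rw [hμ.2.2]; infer_instance
  exact aemeasurable_of_map_neZero this

lemma InvariantProb.integral_comp {T V : ℝ → ℝ} {μ : Measure ℝ} (hμ : InvariantProb T μ)
    (hV : Measurable V) : ∫ x, V (T x) ∂μ = ∫ x, V x ∂μ := by
  rw [← integral_map hμ.aemeasurable hV.aestronglyMeasurable, hμ.2.2]

lemma ergMax_nonpos_of_le_coboundary {T f V : ℝ → ℝ} {M : ℝ} (hV : Measurable V)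
    (hVM : ∀ x, |V x| ≤ M) (hf : ∀ x ∈ Icc (0 : ℝ) 1, f x ≤ V (T x) - V x) : ergMax T f ≤ 0 := by
  apply Real.sSup_nonpos
  rintro r ⟨μ, hμ, rfl⟩
  have := hμ.1
  by_cases hfi : Integrable f μ
  swap
  · rw [integral_undef hfi]
  have hVi : Integrable V μ :=
    .of_bound hV.aestronglyMeasurable M (.of_forall hVM)
  have hVTi : Integrable (fun x => V (T x)) μ :=
    .of_bound (hV.comp_aemeasurable hμ.aemeasurable).aestronglyMeasurable M
      (.of_forall fun x => hVM (T x))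
  have hIcc : ∀ᵐ x ∂μ, x ∈ Icc (0 : ℝ) 1 := (mem_ae_iff_prob_eq_one measurableSet_Icc).2 hμ.2.1
  calc ∫ x, f x ∂μ ≤ ∫ x, (V (T x) - V x) ∂μ :=
        integral_mono_ae hfi (hVTi.sub hVi) (hIcc.mono hf)
    _ = 0 := by rw [integral_sub hVTi hVi, hμ.integral_comp hV, sub_self]

lemma rpow_mul_neg_log_rpow_le {t β x : ℝ} (ht : 0 < t) (hβ : 0 ≤ β) (hx0 : 0 < x) (hx1 : x ≤ 1) :
    x ^ t * (-log x) ^ β ≤ (β / t) ^ β := by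
  rcases hβ.eq_or_lt with rfl | hβ
  · simpa using rpow_le_one hx0.le hx1 ht.le
  have hlog : 0 ≤ -log x := neg_nonneg.2 (log_nonpos hx0.le hx1)
  have hle : x ^ (t / β) * -log x ≤ β / t := by
    have h := abs_log_mul_self_rpow_lt x (t / β) hx0 hx1 (by positivity)
    rw [one_div_div] at h
    linarith [neg_le_abs (log x * x ^ (t / β))]
  calc x ^ t * (-log x) ^ β = (x ^ (t / β) * -log x) ^ β := by
        rw [mul_rpow (by positivity) hlog, ← rpow_mul hx0.le, div_mul_cancel₀ _ hβ.ne']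
    _ ≤ (β / t) ^ β := by gcongr

lemma rpow_le_mul_rpow_mul_neg_log_rpow {s α β x : ℝ} (hα : α < s) (hβ : 0 ≤ β)
    (hx0 : 0 < x) (hx1 : x < 1) :
    x ^ s ≤ (β / (s - α)) ^ β * (x ^ α * (-log x) ^ (-β)) := by
  have hlog : 0 < -log x := neg_pos.2 (log_neg hx0 hx1)
  calc x ^ s = x ^ (s - α) * (-log x) ^ β * (x ^ α * (-log x) ^ (-β)) := by
        rw [mul_mul_mul_comm, ← rpow_add hx0, ← rpow_add hlog]
        simp
    _ ≤ _ := by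
        gcongr
        exact rpow_mul_neg_log_rpow_le (sub_pos.2 hα) hβ hx0 hx1.le

lemma exists_rpow_le_mul_omegaAB {s α β h₀ : ℝ} (hs : 0 < s) (hh₀ : h₀ ∈ Ioo (0 : ℝ) 1)
    (hαβ : (α < s ∧ 0 ≤ β) ∨ (α = s ∧ β = 0)) :
    ∃ C > 0, ∀ t ∈ Icc (0 : ℝ) 1, t ^ s ≤ C * omegaAB α β h₀ t := by
  obtain ⟨C, hC, hsmall⟩ : ∃ C > 0, ∀ t ∈ Ioo (0 : ℝ) 1,
      t ^ s ≤ C * (t ^ α * (-log t) ^ (-β)) := by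
    rcases hαβ with ⟨hα, hβ⟩ | ⟨rfl, rfl⟩
    · refine ⟨(β / (s - α)) ^ β, ?_, fun t ht =>
        rpow_le_mul_rpow_mul_neg_log_rpow hα hβ ht.1 ht.2⟩
      rcases hβ.eq_or_lt with rfl | hβ
      · simp
      · have := sub_pos.2 hα
        positivity
    · exact ⟨1, one_pos, fun t _ => by simp⟩
  have hlog {t : ℝ} (ht0 : 0 < t) (ht1 : t < 1) : 0 < -log t := neg_pos.2 (log_neg ht0 ht1)
  set D := h₀ ^ α * (-log h₀) ^ (-β)
  have hD : 0 < D := mul_pos (rpow_pos_of_pos hh₀.1 _) (rpow_pos_of_pos (hlog hh₀.1 hh₀.2) _)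
  refine ⟨max C D⁻¹, by positivity, fun t ht => ?_⟩
  unfold omegaAB
  split_ifs with ht0 hth₀
  · simp [le_antisymm ht0 ht.1, zero_rpow hs.ne']
  · have ht0 := not_le.1 ht0
    have := hlog ht0 (hth₀.trans hh₀.2)
    refine (hsmall t ⟨ht0, hth₀.trans hh₀.2⟩).trans ?_
    gcongr
    exact le_max_left _ _
  · calc t ^ s ≤ 1 := rpow_le_one ht.1 ht.2 hs.le
      _ = D⁻¹ * D := (inv_mul_cancel₀ hD.ne').symm
      _ ≤ max C D⁻¹ * D := by gcongr; exact le_max_right _ _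

lemma abs_rpow_sub_rpow_le_of_le_one {s a b : ℝ} (hs0 : 0 ≤ s) (hs1 : s ≤ 1) (ha : 0 ≤ a)
    (hb : 0 ≤ b) : |a ^ s - b ^ s| ≤ |a - b| ^ s := by
  wlog hba : b ≤ a generalizing a b
  · rw [abs_sub_comm, abs_sub_comm a b]
    exact this hb ha (le_of_not_ge hba)
  rw [abs_of_nonneg (sub_nonneg.2 (rpow_le_rpow hb hba hs0)), abs_of_nonneg (sub_nonneg.2 hba),
    sub_le_iff_le_add]
  simpa using rpow_add_le_add_rpow (sub_nonneg.2 hba) hb hs0 hs1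

lemma abs_rpow_sub_rpow_le_of_one_le {s a b : ℝ} (hs : 1 ≤ s) (ha : a ∈ Icc (0 : ℝ) 1)
    (hb : b ∈ Icc (0 : ℝ) 1) : |a ^ s - b ^ s| ≤ s * |a - b| := by
  refine (convex_Icc (0 : ℝ) 1).norm_image_sub_le_of_norm_hasDerivWithin_le (f := (· ^ s))
    (fun x _ => (hasDerivAt_rpow_const (Or.inr hs)).hasDerivWithinAt) (fun x hx => ?_) hb ha
  rw [norm_of_nonneg (mul_nonneg (by linarith) (rpow_nonneg hx.1 _))]
  exact mul_le_of_le_one_right (by linarith) (rpow_le_one hx.1 hx.2 (by linarith))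

lemma abs_rpow_sub_rpow_le {s a b : ℝ} (hs : 0 ≤ s) (ha : a ∈ Icc (0 : ℝ) 1)
    (hb : b ∈ Icc (0 : ℝ) 1) : |a ^ s - b ^ s| ≤ max s 1 * |a - b| ^ min s 1 := by
  rcases le_total s 1 with h | h
  · simpa [h] using abs_rpow_sub_rpow_le_of_le_one hs h ha.1 hb.1
  · simpa [h] using abs_rpow_sub_rpow_le_of_one_le h ha hb

/-- The increment of `sin ∘ log` from `x` to `x * (1 + x ^ r⁻¹)`, in the variable
`y = x ^ r⁻¹` (for `r ≠ 0`), in which it is Lipschitz. -/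
def sinIncrement (r y : ℝ) : ℝ := sin (r * log y + log (1 + y)) - sin (r * log y)

lemma log_one_add_mem_Icc {y : ℝ} (hy : 0 ≤ y) : log (1 + y) ∈ Icc 0 y :=
  ⟨log_nonneg (by linarith), by linarith [log_le_sub_one_of_pos (show 0 < 1 + y by linarith)]⟩

lemma sinIncrement_zero (r : ℝ) : sinIncrement r 0 = 0 := by simp [sinIncrement]

lemma abs_sinIncrement_le {r y : ℝ} (hy : 0 ≤ y) : |sinIncrement r y| ≤ y := by
  have hlog := log_one_add_mem_Icc hy
  calc |sinIncrement r y| ≤ |r * log y + log (1 + y) - r * log y| := abs_sin_sub_sin_le _ _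
    _ = log (1 + y) := by rw [add_sub_cancel_left, abs_of_nonneg hlog.1]
    _ ≤ y := hlog.2

lemma hasDerivAt_sinIncrement (r : ℝ) {y : ℝ} (hy : 0 < y) :
    HasDerivAt (sinIncrement r)
      (cos (r * log y + log (1 + y)) * (r * y⁻¹ + (1 + y)⁻¹) - cos (r * log y) * (r * y⁻¹)) y := by
  have hlog : HasDerivAt (fun y => r * log y) (r * y⁻¹) y := (hasDerivAt_log hy.ne').const_mul r
  have hlog_one_add : HasDerivAt (fun y => log (1 + y)) (1 + y)⁻¹ y := by
    simpa using ((hasDerivAt_id y).const_add 1).log (by simp; linarith)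
  exact (hlog.add hlog_one_add).sin.sub hlog.sin

lemma abs_deriv_sinIncrement_le (r : ℝ) {y : ℝ} (hy : 0 < y) :
    |cos (r * log y + log (1 + y)) * (r * y⁻¹ + (1 + y)⁻¹) - cos (r * log y) * (r * y⁻¹)|
      ≤ |r| + 1 := by
  have hlog := log_one_add_mem_Icc hy.le
  set A := cos (r * log y + log (1 + y))
  set B := cos (r * log y)
  have hAB : |A - B| ≤ y :=
    calc |A - B| ≤ |r * log y + log (1 + y) - r * log y| := abs_cos_sub_cos_le _ _
      _ ≤ y := by rw [add_sub_cancel_left, abs_of_nonneg hlog.1]; exact hlog.2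
  have hA : |A| ≤ 1 := abs_cos_le_one _
  calc |A * (r * y⁻¹ + (1 + y)⁻¹) - B * (r * y⁻¹)|
      = |(A - B) * (r * y⁻¹) + A * (1 + y)⁻¹| := by ring_nf
    _ ≤ |A - B| * (|r| * y⁻¹) + |A| * (1 + y)⁻¹ := by
        refine (abs_add_le _ _).trans_eq ?_
        rw [abs_mul, abs_mul, abs_mul, abs_of_pos (inv_pos.2 hy),
          abs_of_pos (show 0 < (1 + y)⁻¹ by positivity)]
    _ ≤ y * (|r| * y⁻¹) + 1 * 1 := by
        gcongr
        exact inv_le_one_of_one_le₀ (by linarith)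
    _ = |r| + 1 := by field_simp

lemma abs_sinIncrement_sub_le (r : ℝ) {a b : ℝ} (ha : 0 ≤ a) (hb : 0 ≤ b) :
    |sinIncrement r a - sinIncrement r b| ≤ (|r| + 1) * |a - b| := by
  wlog hba : b ≤ a generalizing a b
  · rw [abs_sub_comm, abs_sub_comm a b]
    exact this hb ha (le_of_not_ge hba)
  rcases hb.eq_or_lt with rfl | hb
  · rw [sinIncrement_zero, sub_zero, sub_zero, abs_of_nonneg ha]
    nlinarith [abs_sinIncrement_le (r := r) ha, abs_nonneg r]
  · exact (convex_Ioi (0 : ℝ)).norm_image_sub_le_of_norm_hasDerivWithin_le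
      (fun y hy => (hasDerivAt_sinIncrement r hy).hasDerivWithinAt)
      (fun y hy => abs_deriv_sinIncrement_le r hy) hb (hb.trans_le hba)

/-- The branch at the fixed point `0` of the Manneville–Pomeau map of exponent `s`, without
reduction modulo `1`. -/
def mpBranch (s x : ℝ) : ℝ := x * (1 + x ^ s)

lemma mpBranch_zero (s : ℝ) : mpBranch s 0 = 0 := zero_mul _

lemma self_le_mpBranch {s x : ℝ} (hx : 0 ≤ x) : x ≤ mpBranch s x :=
  le_mul_of_one_le_right hx (le_add_of_nonneg_right (rpow_nonneg hx s))

lemma abs_sub_le_abs_mpBranch_sub {s x y : ℝ} (hs : 0 ≤ s) (hx : 0 ≤ x) (hy : 0 ≤ y) :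
    |x - y| ≤ |mpBranch s x - mpBranch s y| := by
  wlog hyx : y ≤ x generalizing x y
  · rw [abs_sub_comm, abs_sub_comm (mpBranch s x)]
    exact this hy hx (le_of_not_ge hyx)
  have hmul : y * y ^ s ≤ x * x ^ s := by gcongr
  rw [abs_of_nonneg (sub_nonneg.2 hyx)]
  refine le_trans ?_ (le_abs_self _)
  unfold mpBranch
  linarith

lemma mul_pow_le_iterate_mpBranch {s x : ℝ} (hs : 0 ≤ s) (hx : 0 < x) (k : ℕ) :
    x * (1 + x ^ s) ^ k ≤ (mpBranch s)^[k] x := by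
  induction k with
  | zero => simp
  | succ k ih =>
    have hle : x ≤ (mpBranch s)^[k] x := ih.trans' <| le_mul_of_one_le_right hx.le <|
      one_le_pow₀ <| le_add_of_nonneg_right <| by positivity
    rw [Function.iterate_succ_apply', pow_succ, ← mul_assoc]
    exact mul_le_mul ih (by gcongr) (by positivity) (hx.le.trans hle)

lemma iterate_mpBranch_pos {s x : ℝ} (hs : 0 ≤ s) (hx : 0 < x) (k : ℕ) :
    0 < (mpBranch s)^[k] x :=
  lt_of_lt_of_le (by positivity) (mul_pow_le_iterate_mpBranch hs hx k)

lemma exists_last_iterate_mpBranch_le {s x z : ℝ} (hs : 0 ≤ s) (hx : 0 < x) (hxz : x ≤ z) :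
    ∃ n, (∀ k ≤ n, (mpBranch s)^[k] x ≤ z) ∧ z < mpBranch s ((mpBranch s)^[n] x) := by
  classical
  have hescape : ∃ k, z < (mpBranch s)^[k] x := by
    obtain ⟨k, hk⟩ := pow_unbounded_of_one_lt (z / x)
      (lt_add_of_pos_right 1 (rpow_pos_of_pos hx s))
    exact ⟨k, ((div_lt_iff₀' hx).1 hk).trans_le (mul_pow_le_iterate_mpBranch hs hx k)⟩
  obtain ⟨n, hn⟩ := Nat.exists_eq_succ_of_ne_zero
    (show Nat.find hescape ≠ 0 by simpa using hxz)
  refine ⟨n, fun k hk => not_lt.1 (Nat.find_min hescape (by omega)), ?_⟩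
  simpa only [hn, Nat.succ_eq_add_one, Function.iterate_succ_apply'] using Nat.find_spec hescape

/-- The bounded function `sin ∘ log`, which has no limit at `0`. It takes the value `0` at `0`
because `log 0 = 0` in Mathlib. -/
def logSine (x : ℝ) : ℝ := sin (log x)

lemma measurable_logSine : Measurable logSine := measurable_sin.comp measurable_log

lemma abs_logSine_le_one (x : ℝ) : |logSine x| ≤ 1 := abs_sin_le_one _

lemma exists_logSine_eq_neg_one_one {δ : ℝ} (hδ : 0 < δ) :
    ∃ x z, 0 < x ∧ x ≤ z ∧ z ≤ δ ∧ logSine x = -1 ∧ logSine z = 1 := by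
  obtain ⟨N, hN⟩ := exists_nat_ge ((π / 2 - log δ) / (2 * π))
  rw [div_le_iff₀ (by positivity)] at hN
  refine ⟨exp (-(π / 2) - N * (2 * π)), exp (π / 2 - N * (2 * π)), exp_pos _,
    exp_le_exp.2 (by linarith [pi_pos]), (le_log_iff_exp_le hδ).1 (by linarith), ?_, ?_⟩
  · rw [logSine, log_exp, sin_sub_nat_mul_two_pi, sin_neg, sin_pi_div_two]
  · rw [logSine, log_exp, sin_sub_nat_mul_two_pi, sin_pi_div_two]

lemma logSine_nonneg_of_lt_mpBranch {s x z : ℝ} (hs : 0 ≤ s) (hx : 0 < x) (hxz : x ≤ z)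
    (hz1 : z ≤ 1) (hzx : z < mpBranch s x) (hz : logSine z = 1) : 0 ≤ logSine x := by
  have hxs : 0 < x ^ s := rpow_pos_of_pos hx s
  have hlog_le : log x ≤ log z := log_le_log hx hxz
  have hlog_ge : log z ≤ log x + 1 :=
    calc log z ≤ log (mpBranch s x) := log_le_log (hx.trans_le hxz) hzx.le
      _ = log x + log (1 + x ^ s) := log_mul hx.ne' (by positivity)
      _ ≤ log x + x ^ s := by gcongr; exact (log_one_add_mem_Icc hxs.le).2
      _ ≤ log x + 1 := by gcongr; exact rpow_le_one hx.le (hxz.trans hz1) hs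
  have hsin : logSine z - logSine x ≤ |log z - log x| :=
    (le_abs_self _).trans (abs_sin_sub_sin_le _ _)
  rw [hz, abs_of_nonneg (by linarith)] at hsin
  linarith

lemma exists_orbit_logSine_rising {s δ : ℝ} (hs : 0 ≤ s) (hδ : 0 < δ) :
    ∃ x n, (∀ k ≤ n, (mpBranch s)^[k] x ∈ Ioc 0 δ) ∧
      logSine x = -1 ∧ 0 ≤ logSine ((mpBranch s)^[n] x) := by
  obtain ⟨x, z, hx, hxz, hz, hVx, hVz⟩ := exists_logSine_eq_neg_one_one (lt_min hδ one_pos)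
  obtain ⟨n, hle, hlt⟩ := exists_last_iterate_mpBranch_le hs hx hxz
  exact ⟨x, n, fun k hk => ⟨iterate_mpBranch_pos hs hx k,
      (hle k hk).trans (hz.trans (min_le_left _ _))⟩, hVx,
    logSine_nonneg_of_lt_mpBranch hs (iterate_mpBranch_pos hs hx n) (hle n le_rfl)
      (hz.trans (min_le_right _ _)) hlt hVz⟩

lemma not_continuousWithinAt_of_sub_logSine_le {s d : ℝ} {u : ℝ → ℝ} (hs : 0 ≤ s) (hd : 0 < d)
    (hu : ∀ x ∈ Ioc 0 d, u x - logSine x ≤ u (mpBranch s x) - logSine (mpBranch s x)) :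
    ¬ ContinuousWithinAt u (Ici 0) 0 := by
  intro hcont
  obtain ⟨δ, hδ, hnear⟩ := Metric.continuousWithinAt_iff.1 hcont (1 / 2) (by norm_num)
  obtain ⟨x, n, horbit, hVx, hVn⟩ :=
    exists_orbit_logSine_rising hs (lt_min (half_pos hδ) hd)
  have hmono : ∀ k ≤ n, u x - logSine x
      ≤ u ((mpBranch s)^[k] x) - logSine ((mpBranch s)^[k] x) := by
    intro k hk
    induction k with
    | zero => exact le_rfl
    | succ k ih =>
      have hk' : k ≤ n := by omega
      rw [Function.iterate_succ_apply']
      exact (ih hk').trans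
        (hu _ ⟨(horbit k hk').1, (horbit k hk').2.trans (min_le_right _ _)⟩)
  have hclose : ∀ k ≤ n, |u ((mpBranch s)^[k] x) - u 0| < 1 / 2 := by
    intro k hk
    obtain ⟨hpos, hle⟩ := horbit k hk
    refine hnear hpos.le ?_
    rw [dist_zero_right, norm_of_nonneg hpos.le]
    linarith [min_le_left (δ / 2) d]
  have hstart : |u x - u 0| < 1 / 2 := hclose 0 n.zero_le
  linarith [hmono n le_rfl, abs_lt.1 hstart, abs_lt.1 (hclose n le_rfl)]

/-- The coboundary of `logSine` along `mpBranch s`, a Hölder function although `logSine` is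
discontinuous at `0`. -/
def logSineCoboundary (s x : ℝ) : ℝ := logSine (mpBranch s x) - logSine x

lemma logSineCoboundary_eq_sinIncrement {s x : ℝ} (hs : s ≠ 0) (hx : 0 ≤ x) :
    logSineCoboundary s x = sinIncrement s⁻¹ (x ^ s) := by
  rcases hx.eq_or_lt with rfl | hx
  · simp [logSineCoboundary, mpBranch_zero, zero_rpow hs, sinIncrement_zero]
  · rw [logSineCoboundary, sinIncrement, logSine, logSine, mpBranch, log_mul hx.ne' (by positivity),
      log_rpow hx, inv_mul_cancel_left₀ hs]

lemma memCmod_logSineCoboundary {s : ℝ} (hs : 0 < s) :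
    MemCmod (fun t => t ^ min s 1) (logSineCoboundary s) := by
  refine ⟨(|s⁻¹| + 1) * max s 1, by positivity, fun x hx y hy => ?_⟩
  calc |logSineCoboundary s x - logSineCoboundary s y|
      = |sinIncrement s⁻¹ (x ^ s) - sinIncrement s⁻¹ (y ^ s)| := by
        rw [logSineCoboundary_eq_sinIncrement hs.ne' hx.1,
          logSineCoboundary_eq_sinIncrement hs.ne' hy.1]
    _ ≤ (|s⁻¹| + 1) * |x ^ s - y ^ s| :=
        abs_sinIncrement_sub_le _ (rpow_nonneg hx.1 _) (rpow_nonneg hy.1 _)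
    _ ≤ (|s⁻¹| + 1) * (max s 1 * |x - y| ^ min s 1) := by
        gcongr
        exact abs_rpow_sub_rpow_le hs.le hx hy
    _ = (|s⁻¹| + 1) * max s 1 * |x - y| ^ min s 1 := (mul_assoc _ _ _).symm

/-- `logSineCoboundary s` with a penalty on `[c / 2, ∞)`, to be compared with the coboundary of
`logSine` along a map that agrees with `mpBranch s` only up to `c`. The slope `8 / c` makes the
penalty at least `4` beyond `c`, and the two coboundaries take values in `[-2, 2]`. -/
def penalizedCoboundary (s c x : ℝ) : ℝ := logSineCoboundary s x - 8 / c * max (x - c / 2) 0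

lemma memCmod_penalizedCoboundary {s c : ℝ} (hs : 0 < s) (hc : 0 < c) :
    MemCmod (fun t => t ^ min s 1) (penalizedCoboundary s c) := by
  refine (memCmod_logSineCoboundary hs).sub
    (memCmod_rpow_of_lipschitz (le_min hs.le zero_le_one) (min_le_right s 1)
      (K := 8 / c) (by positivity) fun x _ y _ => ?_)
  rw [← mul_sub, abs_mul, abs_of_pos (by positivity : 0 < 8 / c)]
  refine mul_le_mul_of_nonneg_left ?_ (by positivity)
  exact (abs_max_sub_max_le_abs _ _ _).trans_eq (congrArg abs (sub_sub_sub_cancel_right x y _))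

lemma penalizedCoboundary_of_le_half {s c x : ℝ} (hx : x ≤ c / 2) :
    penalizedCoboundary s c x = logSineCoboundary s x := by
  rw [penalizedCoboundary, max_eq_right (by linarith), mul_zero, sub_zero]

lemma penalizedCoboundary_le {s c x : ℝ} {T : ℝ → ℝ} (hc : 0 < c)
    (hT : EqOn T (mpBranch s) (Icc 0 c)) (hx : 0 ≤ x) :
    penalizedCoboundary s c x ≤ logSine (T x) - logSine x := by
  unfold penalizedCoboundary logSineCoboundary
  rcases le_or_gt x c with hxc | hcx
  · rw [hT ⟨hx, hxc⟩]
    exact sub_le_self _ (by positivity)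
  · have hpenalty : 4 ≤ 8 / c * max (x - c / 2) 0 :=
      calc (4 : ℝ) = 8 / c * (c / 2) := by field_simp; norm_num
        _ ≤ 8 / c * max (x - c / 2) 0 := by
          gcongr
          exact le_max_of_le_left (by linarith)
    linarith [abs_le.1 (abs_logSine_le_one (mpBranch s x)), abs_le.1 (abs_logSine_le_one (T x))]

lemma not_isSubaction_penalizedCoboundary {s c : ℝ} {T u : ℝ → ℝ} (hs : 0 ≤ s) (hc : 0 < c)
    (hT : EqOn T (mpBranch s) (Icc 0 c)) (hu : ContinuousWithinAt u (Ici 0) 0) :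
    ¬ IsSubaction T (penalizedCoboundary s c) u := by
  intro hsub
  have herg : ergMax T (penalizedCoboundary s c) ≤ 0 :=
    ergMax_nonpos_of_le_coboundary measurable_logSine abs_logSine_le_one
      fun x hx => penalizedCoboundary_le hc hT hx.1
  refine not_continuousWithinAt_of_sub_logSine_le hs
    (lt_min (half_pos hc) one_pos) (fun x hx => ?_) hu
  have hxc : x ≤ c / 2 := hx.2.trans (min_le_left _ _)
  have hsubx := (hsub x ⟨hx.1.le, hx.2.trans (min_le_right _ _)⟩).trans herg
  rw [penalizedCoboundary_of_le_half hxc, hT ⟨hx.1.le, by linarith⟩, logSineCoboundary] at hsubx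
  linarith

section InverseBranch

variable {s : ℝ} {U : ℝ → ℝ}

lemma abs_sub_le_of_rightInvOn_mpBranch (hs : 0 ≤ s) (hU : MapsTo U (Icc 0 1) (Ici 0))
    (hinv : RightInvOn U (mpBranch s) (Icc 0 1)) {x y : ℝ} (hx : x ∈ Icc (0 : ℝ) 1)
    (hy : y ∈ Icc (0 : ℝ) 1) : |U x - U y| ≤ |x - y| := by
  simpa only [hinv hx, hinv hy] using abs_sub_le_abs_mpBranch_sub hs (hU hx) (hU hy)

lemma apply_mpBranch_of_rightInvOn (hs : 0 ≤ s) (hU : MapsTo U (Icc 0 1) (Ici 0))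
    (hinv : RightInvOn U (mpBranch s) (Icc 0 1)) {x : ℝ} (hx : 0 ≤ x)
    (hx1 : mpBranch s x ∈ Icc (0 : ℝ) 1) : U (mpBranch s x) = x := by
  have h := abs_sub_le_abs_mpBranch_sub hs (hU hx1) hx
  rw [hinv hx1, sub_self, abs_zero] at h
  exact sub_eq_zero.1 (abs_nonpos_iff.1 h)

lemma memCmod_logSineCoboundary_comp (hs : 0 < s) (hU : MapsTo U (Icc 0 1) (Ici 0))
    (hinv : RightInvOn U (mpBranch s) (Icc 0 1)) :
    MemCmod (fun t => t ^ min s 1) (logSineCoboundary s ∘ U) :=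
  (memCmod_logSineCoboundary hs).comp_of_abs_sub_le
    (monotoneOn_rpow_Ici_of_exponent_nonneg (le_min hs.le zero_le_one))
    (fun _ hx => ⟨hU hx, (self_le_mpBranch (hU hx)).trans ((hinv hx).trans_le hx.2)⟩)
    fun _ hx _ hy => abs_sub_le_of_rightInvOn_mpBranch hs.le hU hinv hx hy

lemma not_isSubaction_logSineCoboundary_comp {u : ℝ → ℝ} (hs : 0 ≤ s)
    (hU : MapsTo U (Icc 0 1) (Ici 0)) (hinv : RightInvOn U (mpBranch s) (Icc 0 1))
    (hu : ContinuousWithinAt u (Ici 0) 0) : ¬ IsSubaction U (logSineCoboundary s ∘ U) u := by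
  intro hsub
  have herg : ergMax U (logSineCoboundary s ∘ U) ≤ 0 := by
    refine ergMax_nonpos_of_le_coboundary (V := fun x => -logSine x) measurable_logSine.neg
      (fun x => (abs_neg _).trans_le (abs_logSine_le_one x)) fun x hx => ?_
    rw [Function.comp_apply, logSineCoboundary, hinv hx]
    linarith
  refine not_continuousWithinAt_of_sub_logSine_le (u := fun x => -u x) hs one_half_pos
    (fun x hx => ?_) hu.neg
  have hBx : mpBranch s x ∈ Icc (0 : ℝ) 1 := by
    have hxs : x ^ s ≤ 1 := rpow_le_one hx.1.le (hx.2.trans (by norm_num)) hs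
    refine ⟨hx.1.le.trans (self_le_mpBranch hx.1.le), ?_⟩
    calc x * (1 + x ^ s) ≤ x * (1 + 1) := by have := hx.1; gcongr
      _ ≤ 1 := by linarith [hx.2]
  have hsubx := (hsub _ hBx).trans herg
  rw [Function.comp_apply, apply_mpBranch_of_rightInvOn hs hU hinv hx.1.le hBx,
    logSineCoboundary] at hsubx
  linarith

end InverseBranch

theorem manneville_pomeau_no_continuous_subaction_general {s c : ℝ} {T U : ℝ → ℝ} (hs : 0 < s)
    (hc : 0 < c) (hT : EqOn T (mpBranch s) (Icc 0 c)) (hU : MapsTo U (Icc 0 1) (Ici 0))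
    (hinv : RightInvOn U (mpBranch s) (Icc 0 1)) :
    ∃ f g : ℝ → ℝ, MemCmod (fun t => t ^ min s 1) f ∧ MemCmod (fun t => t ^ min s 1) g ∧
      (¬ ∃ u : ℝ → ℝ, ContinuousOn u (Icc 0 1) ∧ IsSubaction T f u) ∧
      (¬ ∃ u : ℝ → ℝ, ContinuousOn u (Icc 0 1) ∧ IsSubaction U g u) := by
  have hcont {u : ℝ → ℝ} (hu : ContinuousOn u (Icc 0 1)) : ContinuousWithinAt u (Ici 0) 0 :=
    (hu 0 (left_mem_Icc.2 zero_le_one)).mono_of_mem_nhdsWithin (Icc_mem_nhdsGE one_pos)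
  exact ⟨penalizedCoboundary s c, logSineCoboundary s ∘ U, memCmod_penalizedCoboundary hs hc,
    memCmod_logSineCoboundary_comp hs hU hinv,
    fun ⟨_, hu, hsub⟩ => not_isSubaction_penalizedCoboundary hs.le hc hT (hcont hu) hsub,
    fun ⟨_, hu, hsub⟩ => not_isSubaction_logSineCoboundary_comp hs.le hU hinv (hcont hu) hsub⟩

theorem manneville_pomeau_no_continuous_subaction
    (s : ℝ) (hs : s ∈ Ioo (0:ℝ) 1)
    (c : ℝ) (hc : c ∈ Ioo (0:ℝ) 1) (hc1 : c * (1 + c ^ s) = 1)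
    (hcuniq : ∀ c' ∈ Ioo (0:ℝ) 1, c' * (1 + c' ^ s) = 1 → c' = c)
    (T U : ℝ → ℝ)
    (hTmaps : MapsTo T (Icc 0 1) (Icc 0 1))
    (hT : ∀ x ∈ Icc (0:ℝ) 1, T x = if x ≤ c then x * (1 + x ^ s) else x * (1 + x ^ s) - 1)
    (hUmaps : MapsTo U (Icc 0 1) (Icc 0 c))
    (hTU : ∀ x ∈ Icc (0:ℝ) 1, T (U x) = x)
    (hUT : ∀ x ∈ Icc (0:ℝ) c, U (T x) = x)
    (α β h₀ : ℝ) (hh₀ : h₀ ∈ Ioo (0:ℝ) 1)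
    (hconc : ConcaveModulus (omegaAB α β h₀))
    (hαβ : (0 ≤ α ∧ α < min s 1 ∧ 0 ≤ β ∧ 0 < α + β) ∨ (α = s ∧ β = 0)) :
    ∃ f g : ℝ → ℝ, MemCmod (omegaAB α β h₀) f ∧ MemCmod (omegaAB α β h₀) g ∧
      (¬ ∃ u : ℝ → ℝ, ContinuousOn u (Icc 0 1) ∧ IsSubaction T f u) ∧
      (¬ ∃ u : ℝ → ℝ, ContinuousOn u (Icc 0 1) ∧ IsSubaction U g u) := by
  have hbranch : EqOn T (mpBranch s) (Icc 0 c) := fun x hx =>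
    (hT x ⟨hx.1, hx.2.trans hc.2.le⟩).trans (if_pos hx.2)
  have hinv : RightInvOn U (mpBranch s) (Icc 0 1) := fun x hx =>
    (hbranch (hUmaps hx)).symm.trans (hTU x hx)
  obtain ⟨f, g, hf, hg, hfg⟩ := manneville_pomeau_no_continuous_subaction_general hs.1 hc.1 hbranch
    (hUmaps.mono_right Icc_subset_Ici_self) hinv
  rw [min_eq_left hs.2.le] at hf hg hαβ
  obtain ⟨C, hC, hω⟩ := exists_rpow_le_mul_omegaAB hs.1 hh₀
    (hαβ.imp_left fun ⟨_, hα, hβ, _⟩ => ⟨hα, hβ⟩)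
  exact ⟨f, g, hf.mono hC hω, hg.mono hC hω, hfg⟩

end
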